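/- Let A : ℝ → ℝ^{n×n} and C : ℝ → ℝ^{m×n} be such that there exist ā ≥ 1 with |Φ_A(t₁, t₂)| ≤ ā for all t₁, t₂ ≥ 0 and c̄ ≥ 1 with |C(t)| ≤ c̄ for all t ≥ 0, and suppose the pair (C, A) is asymptotically observable. Define L(t) := Φ_A(t,0) Φ_A(t,0)^T C(t)^T. Then for each connected interconnection Γ = [γ_ij] ∈ ℝ^{p×p}, the solutions x_i of the coupled array ẋ_i(t) = A(t) x_i(t) + L(t) C(t) Σ_{j≠i} γ_ij (x_j(t) − x_i(t)), i = 1,…,p, synchronize to x̄(t) := (r^T ⊗ Φ_A(t,0)) x(0), where x(0) ∈ ℝ^{np} stacks x_1(0),…,x_p(0) and r ∈ ℝ^p satisfies r^T Γ = 0 and r^T 1 = 1; that is, |x_i(t) − x̄(t)| → 0 as t → ∞ for each i. -/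

import Mathlib

open Matrix MeasureTheory Filter
open scoped Kronecker

noncomputable section

/-- Euclidean norm of a vector. -/
def eunorm {ι : Type*} [Fintype ι] (v : ι → ℝ) : ℝ := Real.sqrt (∑ i, v i ^ 2)

/-- Spectral (induced 2-) norm of a matrix. -/
def specNorm {m n : Type*} [Fintype m] [Fintype n] (M : Matrix m n ℝ) : ℝ :=
  sSup {c : ℝ | ∃ v : n → ℝ, eunorm v ≤ 1 ∧ c = eunorm (M.mulVec v)}

/-- Smallest singular value of a matrix. -/
def sigmaMin {m n : Type*} [Fintype m] [Fintype n] (M : Matrix m n ℝ) : ℝ :=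
  sInf {c : ℝ | ∃ v : n → ℝ, eunorm v = 1 ∧ c = eunorm (M.mulVec v)}

/-- Largest singular value of a matrix. -/
def sigmaMax {m n : Type*} [Fintype m] [Fintype n] (M : Matrix m n ℝ) : ℝ :=
  sSup {c : ℝ | ∃ v : n → ℝ, eunorm v = 1 ∧ c = eunorm (M.mulVec v)}

/-- A continuous-time interconnection matrix. -/
def IsInterconnection {p : ℕ} (Γ : Matrix (Fin p) (Fin p) ℝ) : Prop :=
  (∀ i j, i ≠ j → 0 ≤ Γ i j) ∧
  ∀ i, Γ i i = -∑ j ∈ Finset.univ.filter (fun j => j ≠ i), Γ i j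

/-- Connectedness of the graph of a matrix. -/
def ConnectedMat {p : ℕ} (Γ : Matrix (Fin p) (Fin p) ℝ) : Prop :=
  ∃ v : Fin p, ∀ u : Fin p, Relation.ReflTransGen (fun i j => 0 < Γ i j) u v

/-- Membership in `Q̄_n`: symmetric positive semidefinite with spectral norm at most 1. -/
def InQbar {n : ℕ} (R : Matrix (Fin n) (Fin n) ℝ) : Prop :=
  R.PosSemidef ∧ specNorm R ≤ 1

/-- `δ(ε, T) = min{ε/2, ε³/(240 T⁵)}`. -/
def deltaCT (ε T : ℝ) : ℝ := min (ε / 2) (ε ^ 3 / (240 * T ^ 5))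

/-- Sufficient excitation for `Q : ℝ≥0 → Q_n`. -/
def SuffExcitingCT {n : ℕ} (Q : ℝ → Matrix (Fin n) (Fin n) ℝ) : Prop :=
  ∃ ε T : ℕ → ℝ, (∀ i, 0 < ε i) ∧ (∀ i, 0 < T i) ∧
    (∀ i, ε i ≤ sigmaMin (Matrix.of fun a b =>
      ∫ t in (∑ j ∈ Finset.range i, T j)..((∑ j ∈ Finset.range i, T j) + T i), Q t a b)) ∧
    Tendsto (fun N => ∑ i ∈ Finset.range N, deltaCT (ε i) (T i)) atTop atTop

/-- Persistence of excitation for `Q : ℝ≥0 → Q_n`. -/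
def PersExcitingCT {n : ℕ} (Q : ℝ → Matrix (Fin n) (Fin n) ℝ) : Prop :=
  ∃ ε T : ℝ, 0 < ε ∧ 0 < T ∧ ∀ t : ℝ, 0 ≤ t →
    ε ≤ sigmaMin (Matrix.of fun a b => ∫ s in t..(t + T), Q s a b)

/-!
Let `W` be the matrix whose `i`-th row is `Φ(t, 0)⁻¹ x_i(t) - ∑ j, r_j x_j(0)`. The feedback law
turns the coupled array into `Ẇ = Γ W BᵀB` with `B = C Φ(·, 0)`, and `rᵀ W = 0` is preserved. For
small `h > 0` the matrix `S = 1 + h Γ` is row stochastic with positive diagonal, and connectedness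
makes a power of it have a positive column, so that `Sᵏ → 1 rᵀ` and some `Sᴺ` contracts
`{W | rᵀ W = 0}`. By convexity of the squared Frobenius norm, `V = ∑_{i<N} ‖Sⁱ W‖²` then decreases
at a rate of at least `3 / (4 h) ‖W Bᵀ‖²`.

On a window of length `T` over which the Gramian `∫ BᵀB` is at least `ε`, either `V` drops
substantially or `W` barely moves, and in the latter case excitation makes `∫ ‖W Bᵀ‖²` large. In
both cases `V` loses at least a multiple of `ε / (1 + T²)` times its value. These fractions dominate
`δ(ε, T)` up to a constant factor because `ε = O(T)`, hence they have a divergent sum and `V → 0`.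
-/

theorem eunorm_eq_norm {ι : Type*} [Fintype ι] (v : ι → ℝ) : eunorm v = ‖WithLp.toLp 2 v‖ := by
  simp [eunorm, EuclideanSpace.norm_eq]

theorem eunorm_nonneg {ι : Type*} [Fintype ι] (v : ι → ℝ) : 0 ≤ eunorm v :=
  Real.sqrt_nonneg _

theorem eunorm_sq {ι : Type*} [Fintype ι] (v : ι → ℝ) : eunorm v ^ 2 = ∑ i, v i ^ 2 :=
  Real.sq_sqrt (Finset.sum_nonneg fun _ _ => sq_nonneg _)

theorem eunorm_sq_eq_dotProduct {ι : Type*} [Fintype ι] (v : ι → ℝ) :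
    eunorm v ^ 2 = v ⬝ᵥ v := by
  rw [eunorm_sq]
  simp only [dotProduct, sq]

theorem eunorm_smul {ι : Type*} [Fintype ι] (c : ℝ) (v : ι → ℝ) :
    eunorm (c • v) = |c| * eunorm v := by
  rw [eunorm_eq_norm, eunorm_eq_norm, WithLp.toLp_smul, norm_smul, Real.norm_eq_abs]

section SpectralNorm

open scoped Matrix.Norms.L2Operator

variable {ι κ ν : Type*} [Fintype ι] [Fintype κ] [Fintype ν]

theorem specNorm_eq_l2_opNorm [DecidableEq κ] (M : Matrix ι κ ℝ) : specNorm M = ‖M‖ := by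
  rw [l2_opNorm_def, ← ContinuousLinearMap.sSup_unitClosedBall_eq_norm, specNorm]
  congr 1
  ext c
  simp only [Set.mem_ofPred_eq, Set.mem_image, mem_closedBall_zero_iff, eunorm_eq_norm]
  constructor
  · rintro ⟨v, hv, rfl⟩
    exact ⟨WithLp.toLp 2 v, hv, rfl⟩
  · rintro ⟨v, hv, rfl⟩
    exact ⟨v.ofLp, hv, rfl⟩

theorem specNorm_nonneg (M : Matrix ι κ ℝ) : 0 ≤ specNorm M := by
  classical exact specNorm_eq_l2_opNorm M ▸ norm_nonneg M

theorem specNorm_mul_le (M : Matrix ι κ ℝ) (N : Matrix κ ν ℝ) :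
    specNorm (M * N) ≤ specNorm M * specNorm N := by
  classical simpa only [specNorm_eq_l2_opNorm] using l2_opNorm_mul M N

theorem specNorm_mul_le_of_le {M : Matrix ι κ ℝ} {N : Matrix κ ν ℝ} {a b : ℝ}
    (hM : specNorm M ≤ a) (hN : specNorm N ≤ b) : specNorm (M * N) ≤ a * b :=
  (specNorm_mul_le M N).trans <|
    mul_le_mul hM hN (specNorm_nonneg N) ((specNorm_nonneg M).trans hM)

theorem eunorm_mulVec_le (M : Matrix ι κ ℝ) (v : κ → ℝ) :
    eunorm (M *ᵥ v) ≤ specNorm M * eunorm v := by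
  classical
  rw [eunorm_eq_norm, eunorm_eq_norm, specNorm_eq_l2_opNorm]
  exact l2_opNorm_mulVec M (WithLp.toLp 2 v)

end SpectralNorm

section SmallestSingularValue

variable {ι : Type*} [Fintype ι]

theorem sigmaMin_of_isEmpty [IsEmpty ι] (M : Matrix ι ι ℝ) : sigmaMin M = 0 := by
  simp [sigmaMin, eunorm]

theorem sigmaMin_le_eunorm_mulVec (M : Matrix ι ι ℝ) {v : ι → ℝ} (hv : eunorm v = 1) :
    sigmaMin M ≤ eunorm (M *ᵥ v) :=
  csInf_le ⟨0, by rintro _ ⟨w, _, rfl⟩; exact eunorm_nonneg _⟩ ⟨v, hv, rfl⟩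

theorem posSemidef_sub_smul_one_of_le_sigmaMin [DecidableEq ι] {M : Matrix ι ι ℝ}
    (hM : M.PosSemidef) {ε : ℝ} (hε : ε ≤ sigmaMin M) :
    (M - ε • (1 : Matrix ι ι ℝ)).PosSemidef := by
  have hH : (M - ε • (1 : Matrix ι ι ℝ)).IsHermitian :=
    hM.1.sub (by simp [Matrix.IsHermitian])
  refine hH.posSemidef_iff_eigenvalues_nonneg.2 fun i => ?_
  set u : ι → ℝ := (hH.eigenvectorBasis i).ofLp
  set μ : ℝ := hH.eigenvalues i
  have hu : eunorm u = 1 := by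
    rw [eunorm_eq_norm]
    exact hH.eigenvectorBasis.orthonormal.1 i
  have hMu : M *ᵥ u = (μ + ε) • u := by
    have h : (M - ε • (1 : Matrix ι ι ℝ)) *ᵥ u = μ • u := hH.mulVec_eigenvectorBasis i
    rwa [sub_mulVec, smul_mulVec, one_mulVec, sub_eq_iff_eq_add, ← add_smul] at h
  have hnonneg : 0 ≤ μ + ε := by
    have h := hM.dotProduct_mulVec_nonneg u
    rwa [star_trivial, hMu, dotProduct_smul, ← eunorm_sq_eq_dotProduct, hu, one_pow, smul_eq_mul,
      mul_one] at h
  have hle : ε ≤ μ + ε := by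
    calc ε ≤ eunorm (M *ᵥ u) := hε.trans (sigmaMin_le_eunorm_mulVec M hu)
      _ = μ + ε := by rw [hMu, eunorm_smul, hu, mul_one, abs_of_nonneg hnonneg]
  exact le_add_iff_nonneg_left ε |>.1 hle

end SmallestSingularValue

section Frobenius

open scoped Matrix.Norms.Frobenius

variable {ι κ ν : Type*} [Fintype ι] [Fintype κ] [Fintype ν]

theorem frobenius_norm_sq_eq_sum_eunorm_sq (M : Matrix ι κ ℝ) :
    ‖M‖ ^ 2 = ∑ i, eunorm (M i) ^ 2 := by
  rw [frobenius_norm_def, ← Real.sqrt_eq_rpow, Real.sq_sqrt (by positivity)]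
  simp [eunorm_sq]

theorem frobenius_norm_sq_eq_trace (M : Matrix ι κ ℝ) : ‖M‖ ^ 2 = (M * Mᵀ).trace := by
  simp only [frobenius_norm_sq_eq_sum_eunorm_sq, eunorm_sq_eq_dotProduct]
  rfl

theorem frobenius_norm_sq_eq_trace_transpose_mul (M : Matrix ι κ ℝ) :
    ‖M‖ ^ 2 = (Mᵀ * M).trace := by
  rw [frobenius_norm_sq_eq_trace, trace_mul_comm]

theorem frobenius_norm_le_sqrt_card_mul_specNorm (M : Matrix ι κ ℝ) :
    ‖M‖ ≤ √(Fintype.card κ) * specNorm M := by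
  classical
  have hcol : ∀ j, eunorm (Mᵀ j) ≤ specNorm M := fun j => by
    have h := eunorm_mulVec_le M (Pi.single j 1)
    rwa [mulVec_single_one, eunorm_eq_norm (Pi.single j 1), PiLp.toLp_single,
      PiLp.norm_single, norm_one, mul_one] at h
  refine (sq_le_sq₀ (norm_nonneg M)
    (mul_nonneg (Real.sqrt_nonneg _) (specNorm_nonneg M))).1 ?_
  calc ‖M‖ ^ 2 = ∑ j, eunorm (Mᵀ j) ^ 2 := by
        rw [← frobenius_norm_transpose, frobenius_norm_sq_eq_sum_eunorm_sq]
    _ ≤ ∑ _j : κ, specNorm M ^ 2 :=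
        Finset.sum_le_sum fun j _ => pow_le_pow_left₀ (eunorm_nonneg _) (hcol j) 2
    _ = (√(Fintype.card κ) * specNorm M) ^ 2 := by
        rw [Finset.sum_const, nsmul_eq_mul, mul_pow, Real.sq_sqrt (Nat.cast_nonneg _)]; rfl

theorem frobenius_norm_le_sqrt_card_mul_of_specNorm_le {M : Matrix ι κ ℝ} {b : ℝ}
    (hM : specNorm M ≤ b) : ‖M‖ ≤ √(Fintype.card κ) * b :=
  (frobenius_norm_le_sqrt_card_mul_specNorm M).trans
    (mul_le_mul_of_nonneg_left hM (Real.sqrt_nonneg _))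

theorem two_mul_trace_transpose_mul_sub_le (X Y : Matrix ι κ ℝ) :
    2 * (Xᵀ * (Y - X)).trace ≤ ‖Y‖ ^ 2 - ‖X‖ ^ 2 := by
  have hsymm : (Yᵀ * X).trace = (Xᵀ * Y).trace := by
    rw [← trace_transpose, transpose_mul, transpose_transpose]
  have hsq : ‖Y - X‖ ^ 2 = ‖Y‖ ^ 2 - 2 * (Xᵀ * Y).trace + ‖X‖ ^ 2 := by
    simp only [frobenius_norm_sq_eq_trace_transpose_mul, transpose_sub, Matrix.sub_mul,
      Matrix.mul_sub, trace_sub, hsymm]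
    ring
  rw [Matrix.mul_sub, trace_sub, ← frobenius_norm_sq_eq_trace_transpose_mul]
  linarith [sq_nonneg ‖Y - X‖]

theorem mul_frobenius_norm_sq_le_trace [DecidableEq κ] {M : Matrix κ κ ℝ} {ε : ℝ}
    (hM : (M - ε • (1 : Matrix κ κ ℝ)).PosSemidef) (W : Matrix ι κ ℝ) :
    ε * ‖W‖ ^ 2 ≤ (Wᵀ * W * M).trace := by
  have h := (hM.mul_mul_conjTranspose_same W).trace_nonneg
  rw [conjTranspose_eq_transpose_of_trivial, Matrix.mul_sub, Matrix.sub_mul, trace_sub,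
    Matrix.mul_smul, Matrix.mul_one, Matrix.smul_mul, trace_smul, smul_eq_mul,
    ← frobenius_norm_sq_eq_trace, trace_mul_cycle] at h
  exact sub_nonneg.1 h

theorem frobenius_norm_mul_le_of_vecMul_eq_zero {M : Matrix ι κ ℝ} {u : ι → ℝ} {r : κ → ℝ}
    {c : ℝ} (hM : ‖M - vecMulVec u r‖ ≤ c) {Y : Matrix κ ν ℝ} (hY : r ᵥ* Y = 0) :
    ‖M * Y‖ ≤ c * ‖Y‖ := by
  have h : (M - vecMulVec u r) * Y = M * Y := by
    rw [Matrix.sub_mul, vecMulVec_mul, hY, sub_eq_self]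
    exact Matrix.ext fun i _ => mul_zero (u i)
  rw [← h]
  exact (frobenius_norm_mul _ _).trans (mul_le_mul_of_nonneg_right hM (norm_nonneg Y))

end Frobenius

section IncrementsAndDecrements

theorem sq_norm_sub_le_mul_sub_of_sq_norm_deriv_le {E : Type*} [NormedAddCommGroup E]
    [NormedSpace ℝ E] {f f' : ℝ → E} {g g' : ℝ → ℝ} {s t : ℝ} (hst : s ≤ t)
    (hf : ∀ τ ∈ Set.Icc s t, HasDerivAt f (f' τ) τ)
    (hg : ∀ τ ∈ Set.Icc s t, HasDerivAt g (g' τ) τ)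
    (h : ∀ τ ∈ Set.Icc s t, ‖f' τ‖ ^ 2 ≤ g' τ) :
    ‖f t - f s‖ ^ 2 ≤ (t - s) * (g t - g s) := by
  have hlin : ∀ c : ℝ, 0 ≤ c → 2 * c * ‖f t - f s‖ ≤ g t - g s + c ^ 2 * (t - s) := by
    intro c hc
    have hscaled : ∀ τ ∈ Set.Icc s t,
        HasDerivAt (fun τ => (2 * c) • (f τ - f s)) ((2 * c) • f' τ) τ := fun τ hτ =>
      ((hf τ hτ).sub_const _).const_smul _
    have hbound : ∀ τ ∈ Set.Icc s t,
        HasDerivAt (fun τ => g τ - g s + c ^ 2 * (τ - s)) (g' τ + c ^ 2) τ := fun τ hτ => by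
      simpa using ((hg τ hτ).sub_const (g s)).fun_add
        (((hasDerivAt_id τ).sub_const s).const_mul (c ^ 2))
    have hnorm : ∀ v : E, ‖(2 * c) • v‖ = 2 * c * ‖v‖ := fun v =>
      norm_smul_of_nonneg (by positivity) v
    rw [← hnorm]
    refine image_norm_le_of_norm_deriv_right_le_deriv_boundary'
      (fun τ hτ => (hscaled τ hτ).continuousAt.continuousWithinAt)
      (fun τ hτ => (hscaled τ (Set.Ico_subset_Icc_self hτ)).hasDerivWithinAt) (by simp)
      (fun τ hτ => (hbound τ hτ).continuousAt.continuousWithinAt)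
      (fun τ hτ => (hbound τ (Set.Ico_subset_Icc_self hτ)).hasDerivWithinAt)
      (fun τ hτ => ?_) (Set.right_mem_Icc.2 hst)
    rw [hnorm]
    linarith [h τ (Set.Ico_subset_Icc_self hτ), sq_nonneg (c - ‖f' τ‖)]
  rcases hst.eq_or_lt with rfl | hlt
  · simp
  have hts : 0 < t - s := sub_pos.2 hlt
  have hopt := hlin (‖f t - f s‖ / (t - s)) (by positivity)
  field_simp at hopt
  linarith

theorem tendsto_zero_of_mul_le_sub_succ {V c : ℕ → ℝ} (hV : ∀ i, 0 ≤ V i) (hc : ∀ i, 0 ≤ c i)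
    (hdecr : ∀ i, c i * V i ≤ V i - V (i + 1))
    (hsum : Tendsto (fun N => ∑ i ∈ Finset.range N, c i) atTop atTop) :
    Tendsto V atTop (nhds 0) := by
  have hanti : Antitone V := antitone_nat_of_succ_le fun i =>
    sub_nonneg.1 ((mul_nonneg (hc i) (hV i)).trans (hdecr i))
  have hle : ∀ N, (∑ i ∈ Finset.range N, c i) * V N ≤ V 0 := fun N =>
    calc (∑ i ∈ Finset.range N, c i) * V N ≤ ∑ i ∈ Finset.range N, (V i - V (i + 1)) := by
          rw [Finset.sum_mul]
          exact Finset.sum_le_sum fun i hi => (mul_le_mul_of_nonneg_left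
            (hanti (Finset.mem_range.1 hi).le) (hc i)).trans (hdecr i)
      _ = V 0 - V N := Finset.sum_range_sub' V N
      _ ≤ V 0 := sub_le_self _ (hV N)
  refine squeeze_zero' (Eventually.of_forall hV) ?_ (hsum.const_div_atTop (V 0))
  filter_upwards [hsum.eventually_gt_atTop 0] with N hN
  exact (le_div_iff₀' hN).2 (hle N)

theorem tendsto_zero_of_antitoneOn_of_tendsto_comp {V : ℝ → ℝ} {t₀ : ℝ}
    (hV : AntitoneOn V (Set.Ici t₀)) (hpos : ∀ t, t₀ ≤ t → 0 ≤ V t) {τ : ℕ → ℝ}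
    (hτ : ∀ i, t₀ ≤ τ i) (hlim : Tendsto (fun i => V (τ i)) atTop (nhds 0)) :
    Tendsto V atTop (nhds 0) := by
  refine Metric.tendsto_atTop.2 fun η hη => ?_
  obtain ⟨i, hi⟩ := (hlim.eventually_lt_const hη).exists
  refine ⟨τ i, fun t ht => ?_⟩
  have ht₀ : t₀ ≤ t := (hτ i).trans ht
  rw [Real.dist_eq, sub_zero, abs_of_nonneg (hpos t ht₀)]
  exact (hV (hτ i) ht₀ ht).trans_lt hi

end IncrementsAndDecrements

section RowStochastic

variable {ι : Type*} [Fintype ι]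

theorem abs_sub_dotProduct_le {r y : ι → ℝ} (hr : ∑ i, r i = 1) {a d : ℝ}
    (hy : ∀ i, y i ∈ Set.Icc a (a + d)) (i : ι) : |y i - r ⬝ᵥ y| ≤ (∑ j, |r j|) * d := by
  have hsum : y i - r ⬝ᵥ y = ∑ j, r j * (y i - y j) := by
    simp only [mul_sub, Finset.sum_sub_distrib, ← Finset.sum_mul, hr, one_mul, dotProduct]
  rw [hsum, Finset.sum_mul]
  refine (Finset.abs_sum_le_sum_abs _ _).trans (Finset.sum_le_sum fun j _ => ?_)
  rw [abs_mul]
  refine mul_le_mul_of_nonneg_left (abs_le.2 ?_) (abs_nonneg _)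
  constructor <;> linarith [(hy i).1, (hy i).2, (hy j).1, (hy j).2]

variable [DecidableEq ι]

theorem vecMul_pow_eq_self {M : Matrix ι ι ℝ} {r : ι → ℝ} (hr : r ᵥ* M = r) (k : ℕ) :
    r ᵥ* M ^ k = r := by
  induction k with
  | zero => rw [pow_zero, vecMul_one]
  | succ k ih => rw [pow_succ, ← vecMul_vecMul, ih, hr]

theorem mul_le_mulVec_of_forall_le {M : Matrix ι ι ℝ} (hM : M ∈ rowStochastic ℝ ι) {v : ι}
    {α : ℝ} (hα : ∀ i, α ≤ M i v) {y : ι → ℝ} (hy : ∀ j, 0 ≤ y j) (i : ι) :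
    α * y v ≤ (M *ᵥ y) i :=
  (mul_le_mul_of_nonneg_right (hα i) (hy v)).trans
    (Finset.single_le_sum (f := fun j => M i j * y j)
      (fun j _ => mul_nonneg (nonneg_of_mem_rowStochastic hM) (hy j)) (Finset.mem_univ v))

theorem mulVec_sub_const_of_mem_rowStochastic {M : Matrix ι ι ℝ} (hM : M ∈ rowStochastic ℝ ι)
    (x : ι → ℝ) (c : ℝ) (i : ι) : (M *ᵥ fun j => x j - c) i = (M *ᵥ x) i - c := by
  simp only [mulVec, dotProduct, mul_sub, Finset.sum_sub_distrib, ← Finset.sum_mul,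
    sum_row_of_mem_rowStochastic hM, one_mul]

-- A column bounded below by `α` makes every row average give weight `α` to the common value `x v`.
theorem exists_mulVec_mem_Icc {M : Matrix ι ι ℝ} (hM : M ∈ rowStochastic ℝ ι) {v : ι} {α : ℝ}
    (hα : ∀ i, α ≤ M i v) {x : ι → ℝ} {a d : ℝ} (hx : ∀ i, x i ∈ Set.Icc a (a + d)) :
    ∃ a', ∀ i, (M *ᵥ x) i ∈ Set.Icc a' (a' + (1 - α) * d) := by
  refine ⟨a + α * (x v - a), fun i => ?_⟩
  have hlower := mul_le_mulVec_of_forall_le hM hα (fun j => sub_nonneg.2 (hx j).1) i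
  have hupper := mul_le_mulVec_of_forall_le hM hα (fun j => sub_nonneg.2 (hx j).2) i
  have hreflect : (M *ᵥ fun j => a + d - x j) i = a + d - (M *ᵥ x) i := by
    have h := mulVec_sub_const_of_mem_rowStochastic hM x (a + d) i
    rw [← neg_sub _ (a + d), ← h, ← Pi.neg_apply, ← mulVec_neg]
    simp only [Pi.neg_def, neg_sub]
  rw [mulVec_sub_const_of_mem_rowStochastic hM] at hlower
  constructor <;> linarith

theorem exists_pow_mulVec_mem_Icc {M : Matrix ι ι ℝ} (hM : M ∈ rowStochastic ℝ ι) {v : ι}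
    {α : ℝ} (hα : ∀ i, α ≤ M i v) {x : ι → ℝ} {a d : ℝ} (hx : ∀ i, x i ∈ Set.Icc a (a + d))
    (k : ℕ) : ∃ a', ∀ i, (M ^ k *ᵥ x) i ∈ Set.Icc a' (a' + (1 - α) ^ k * d) := by
  induction k with
  | zero => exact ⟨a, by simpa using hx⟩
  | succ k ih =>
    obtain ⟨a', ha'⟩ := ih
    obtain ⟨a'', ha''⟩ := exists_mulVec_mem_Icc hM hα ha'
    refine ⟨a'', fun i => ?_⟩
    rw [pow_succ' M, ← mulVec_mulVec, pow_succ', mul_assoc]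
    exact ha'' i

theorem tendsto_pow_mulVec {M : Matrix ι ι ℝ} (hM : M ∈ rowStochastic ℝ ι) {v : ι}
    (hv : ∀ i, 0 < M i v) {r : ι → ℝ} (hr : r ᵥ* M = r) (hr1 : ∑ i, r i = 1) (x : ι → ℝ)
    (i : ι) : Tendsto (fun k => (M ^ k *ᵥ x) i) atTop (nhds (r ⬝ᵥ x)) := by
  obtain ⟨u, -, hu⟩ := Finset.exists_min_image Finset.univ (M · v) ⟨v, Finset.mem_univ v⟩
  have hx : ∀ j, x j ∈ Set.Icc (-‖x‖) (-‖x‖ + 2 * ‖x‖) := fun j => by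
    have h := abs_le.1 (norm_le_pi_norm x j)
    constructor <;> linarith [h.1, h.2]
  have hgeom : Tendsto (fun k => (∑ j, |r j|) * ((1 - M u v) ^ k * (2 * ‖x‖))) atTop (nhds 0) := by
    have h := tendsto_pow_atTop_nhds_zero_of_lt_one (r := 1 - M u v)
      (sub_nonneg.2 (le_one_of_mem_rowStochastic hM)) (sub_lt_self 1 (hv u))
    simpa using (h.mul_const (2 * ‖x‖)).const_mul (∑ j, |r j|)
  refine tendsto_iff_norm_sub_tendsto_zero.2 (squeeze_zero (fun _ => norm_nonneg _) (fun k => ?_)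
    hgeom)
  obtain ⟨a, ha⟩ := exists_pow_mulVec_mem_Icc hM (fun i => hu i (Finset.mem_univ i)) hx k
  have h := abs_sub_dotProduct_le hr1 ha i
  rwa [dotProduct_mulVec, vecMul_pow_eq_self hr] at h

theorem tendsto_pow_vecMulVec {M : Matrix ι ι ℝ} (hM : M ∈ rowStochastic ℝ ι) {v : ι}
    (hv : ∀ i, 0 < M i v) {r : ι → ℝ} (hr : r ᵥ* M = r) (hr1 : ∑ i, r i = 1) :
    Tendsto (M ^ ·) atTop (nhds (vecMulVec 1 r)) := by
  refine tendsto_pi_nhds.2 fun i => tendsto_pi_nhds.2 fun j => ?_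
  have h := tendsto_pow_mulVec hM hv hr hr1 (Pi.single j 1) i
  simpa [vecMulVec_apply] using h

theorem eventually_pow_apply_pos {M : Matrix ι ι ℝ} (h0 : ∀ i j, 0 ≤ M i j)
    (hdiag : ∀ i, 0 < M i i) {u v : ι} (huv : Relation.ReflTransGen (fun i j => 0 < M i j) u v) :
    ∀ᶠ k in atTop, 0 < (M ^ k) u v := by
  have hstep : ∀ {i l} k, 0 < M i l → 0 < (M ^ k) l v → 0 < (M ^ (k + 1)) i v := by
    intro i l k hil hlv
    rw [pow_succ', mul_apply]
    exact (mul_pos hil hlv).trans_le (Finset.single_le_sum (f := fun l => M i l * (M ^ k) l v)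
      (fun l _ => mul_nonneg (h0 i l) (pow_apply_nonneg h0 k l v)) (Finset.mem_univ l))
  obtain ⟨k, hk⟩ : ∃ k, 0 < (M ^ k) u v := by
    induction huv using Relation.ReflTransGen.head_induction_on with
    | refl => exact ⟨0, by simp⟩
    | head hij _ ih => exact ih.elim fun k hk => ⟨k + 1, hstep k hij hk⟩
  filter_upwards [eventually_ge_atTop k] with l hkl
  induction l, hkl using Nat.le_induction with
  | base => exact hk
  | succ l _ ih => exact hstep l (hdiag u) ih

end RowStochastic

section Interconnection

open scoped Matrix.Norms.Frobenius

variable {p : ℕ} {Γ : Matrix (Fin p) (Fin p) ℝ}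

theorem IsInterconnection.sum_row (hΓ : IsInterconnection Γ) (i : Fin p) : ∑ j, Γ i j = 0 := by
  rw [← Finset.add_sum_erase _ _ (Finset.mem_univ i), hΓ.2 i, Finset.filter_ne',
    neg_add_cancel]

theorem exists_pos_forall_one_add_mul_pos {ι : Type*} [Finite ι] (d : ι → ℝ) :
    ∃ h : ℝ, 0 < h ∧ ∀ i, 0 < 1 + h * d i := by
  have hnear : ∀ i, ∀ᶠ h in nhdsWithin (0 : ℝ) (Set.Ioi 0), 0 < 1 + h * d i := fun i => by
    have hcont : Continuous fun h : ℝ => 1 + h * d i := by fun_prop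
    exact nhdsWithin_le_nhds (hcont.continuousAt.eventually_const_lt (by simp))
  exact (eventually_mem_nhdsWithin.and (eventually_all.2 hnear)).exists

theorem IsInterconnection.one_add_smul_mem_rowStochastic (hΓ : IsInterconnection Γ) {h : ℝ}
    (hh : 0 < h) (hdiag : ∀ i, 0 < 1 + h * Γ i i) :
    1 + h • Γ ∈ rowStochastic ℝ (Fin p) := by
  refine mem_rowStochastic_iff_sum.2 ⟨fun i j => ?_, fun i => ?_⟩
  · rcases eq_or_ne i j with rfl | hij
    · simpa using (hdiag i).le
    · simpa [hij] using mul_nonneg hh.le (hΓ.1 i j hij)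
  · simp [Finset.sum_add_distrib, ← Finset.mul_sum, hΓ.sum_row, one_apply]

theorem ConnectedMat.exists_forall_eventually_pow_apply_pos (hΓ : IsInterconnection Γ)
    (hconn : ConnectedMat Γ) {h : ℝ} (hh : 0 < h) (hdiag : ∀ i, 0 < 1 + h * Γ i i) :
    ∃ v, ∀ᶠ k in atTop, ∀ u, 0 < ((1 + h • Γ) ^ k : Matrix (Fin p) (Fin p) ℝ) u v := by
  obtain ⟨v, hv⟩ := hconn
  refine ⟨v, eventually_all.2 fun u => eventually_pow_apply_pos
    (fun i j => nonneg_of_mem_rowStochastic (hΓ.one_add_smul_mem_rowStochastic hh hdiag))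
    (fun i => by simpa using hdiag i) (Relation.ReflTransGen.mono (fun i j hij => ?_) _ _ (hv u))⟩
  rcases eq_or_ne i j with rfl | hne
  · simpa using hdiag i
  · simpa [hne] using mul_pos hh hij

theorem ConnectedMat.exists_norm_pow_sub_vecMulVec_le (hΓ : IsInterconnection Γ)
    (hconn : ConnectedMat Γ) {r : Fin p → ℝ} (hr : r ᵥ* Γ = 0) (hr1 : ∑ i, r i = 1) {δ : ℝ}
    (hδ : 0 < δ) :
    ∃ (h : ℝ) (N : ℕ), 0 < h ∧ 0 < N ∧ ‖(1 + h • Γ) ^ N - vecMulVec 1 r‖ ≤ δ := by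
  obtain ⟨h, hh, hdiag⟩ := exists_pos_forall_one_add_mul_pos fun i => Γ i i
  have hS := hΓ.one_add_smul_mem_rowStochastic hh hdiag
  obtain ⟨v, hv⟩ := hconn.exists_forall_eventually_pow_apply_pos hΓ hh hdiag
  obtain ⟨k, hk, hkpos⟩ := (hv.and (eventually_gt_atTop 0)).exists
  have hrS : r ᵥ* (1 + h • Γ) = r := by
    rw [vecMul_add, vecMul_one, vecMul_smul, hr, smul_zero, add_zero]
  have hlim := tendsto_pow_vecMulVec (pow_mem hS k) hk (vecMul_pow_eq_self hrS k) hr1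
  obtain ⟨l, hl, hlpos⟩ := ((Metric.tendsto_nhds.1 hlim δ hδ).and (eventually_gt_atTop 0)).exists
  refine ⟨h, k * l, hh, Nat.mul_pos hkpos hlpos, ?_⟩
  rw [pow_mul, ← dist_eq_norm]
  exact hl.le

end Interconnection

section MatrixCalculus

variable {ι κ ν : Type*} {t : ℝ}

theorem hasDerivAt_matrix_iff [Finite ι] [Finite κ] {f : ℝ → Matrix ι κ ℝ} {f' : Matrix ι κ ℝ} :
    HasDerivAt f f' t ↔ ∀ i j, HasDerivAt (fun s => f s i j) (f' i j) t := by
  have := Fintype.ofFinite ι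
  have := Fintype.ofFinite κ
  exact hasDerivAt_pi.trans <| forall_congr' fun _ => hasDerivAt_pi

theorem hasDerivAt_matrix_mul [Finite ι] [Fintype κ] [Finite ν] {X : ℝ → Matrix ι κ ℝ}
    {Y : ℝ → Matrix κ ν ℝ} {X' : Matrix ι κ ℝ} {Y' : Matrix κ ν ℝ} (hX : HasDerivAt X X' t)
    (hY : HasDerivAt Y Y' t) :
    HasDerivAt (fun s => X s * Y s) (X' * Y t + X t * Y') t := by
  rw [hasDerivAt_matrix_iff] at hX hY ⊢
  intro i j
  simp only [mul_apply, Matrix.add_apply, ← Finset.sum_add_distrib]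
  exact HasDerivAt.fun_sum fun k _ => (hX i k).fun_mul (hY k j)

theorem hasDerivAt_const_matrix_mul [Finite ι] [Fintype κ] [Finite ν] (M : Matrix ι κ ℝ)
    {Y : ℝ → Matrix κ ν ℝ} {Y' : Matrix κ ν ℝ} (hY : HasDerivAt Y Y' t) :
    HasDerivAt (fun s => M * Y s) (M * Y') t := by
  have hM : HasDerivAt (fun _ : ℝ => M) 0 t :=
    hasDerivAt_matrix_iff.2 fun i j => hasDerivAt_const t (M i j)
  simpa using hasDerivAt_matrix_mul hM hY

theorem hasDerivAt_matrix_transpose [Finite ι] [Finite κ] {X : ℝ → Matrix ι κ ℝ}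
    {X' : Matrix ι κ ℝ} (hX : HasDerivAt X X' t) : HasDerivAt (fun s => (X s)ᵀ) X'ᵀ t := by
  rw [hasDerivAt_matrix_iff] at hX ⊢
  exact fun i j => hX j i

open scoped Matrix.Norms.Frobenius

variable [Fintype ι] [Fintype κ]

theorem hasDerivAt_frobenius_norm_sq {W : ℝ → Matrix ι κ ℝ} {W' : Matrix ι κ ℝ}
    (hW : HasDerivAt W W' t) :
    HasDerivAt (fun s => ‖W s‖ ^ 2) (2 * ((W t)ᵀ * W').trace) t := by
  have hmul := hasDerivAt_matrix_iff.1 (hasDerivAt_matrix_mul (hasDerivAt_matrix_transpose hW) hW)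
  have htrace : HasDerivAt (fun s => ((W s)ᵀ * W s).trace)
      ((W'ᵀ * W t + (W t)ᵀ * W').trace) t :=
    HasDerivAt.fun_sum fun i _ => hmul i i
  have hsymm : (W'ᵀ * W t).trace = ((W t)ᵀ * W').trace := by
    rw [← trace_transpose, transpose_mul, transpose_transpose]
  rw [trace_add, hsymm, ← two_mul] at htrace
  simpa only [frobenius_norm_sq_eq_trace_transpose_mul] using htrace

theorem hasDerivAt_matrix_inv [DecidableEq ι] {U : ℝ → Matrix ι ι ℝ} {U' : Matrix ι ι ℝ}
    (hU : HasDerivAt U U' t) (hdet : IsUnit (U t).det) :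
    HasDerivAt (fun s => (U s)⁻¹) (-((U t)⁻¹ * U' * (U t)⁻¹)) t := by
  obtain ⟨u, hu⟩ := (isUnit_iff_isUnit_det _).2 hdet
  have hinv : ((u⁻¹ : (Matrix ι ι ℝ)ˣ) : Matrix ι ι ℝ) = (U t)⁻¹ := by
    rw [coe_units_inv, hu]
  have hF := hasFDerivAt_ringInverse (𝕜 := ℝ) u
  rw [hu] at hF
  have h := hF.comp_hasDerivAt t hU
  simp only [Function.comp_def, ← nonsing_inv_eq_ringInverse] at h
  rw [← hinv]
  exact h

end MatrixCalculus

section Lyapunov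

open scoped Matrix.Norms.Frobenius

variable {ι κ μ : Type*} [Fintype ι] [Fintype κ] [Fintype μ]

theorem trace_transpose_mul_mul_gram (W X : Matrix ι κ ℝ) (B : Matrix μ κ ℝ) :
    (Wᵀ * (X * (Bᵀ * B))).trace = ((W * Bᵀ)ᵀ * (X * Bᵀ)).trace := by
  rw [transpose_mul, transpose_transpose, ← Matrix.mul_assoc, ← Matrix.mul_assoc,
    trace_mul_comm _ B, Matrix.mul_assoc B, ← Matrix.mul_assoc Wᵀ]

variable [DecidableEq ι]

/-- The quadratic function `∑_{i<N} ‖Sⁱ Y‖²` (Frobenius norms) of the matrix `Y`. For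
`S = 1 + h Γ`, its derivative along `Ẏ = Γ Y Q`, `Q` positive semidefinite, is at most a telescoping
sum, so it serves as Lyapunov function as soon as `Sᴺ` is a contraction. -/
def powLyapunov (S : Matrix ι ι ℝ) (N : ℕ) (Y : Matrix ι κ ℝ) : ℝ :=
  ∑ i ∈ Finset.range N, ‖S ^ i * Y‖ ^ 2

theorem norm_sq_le_powLyapunov (S : Matrix ι ι ℝ) {N : ℕ} (hN : 0 < N) (Y : Matrix ι κ ℝ) :
    ‖Y‖ ^ 2 ≤ powLyapunov S N Y := by
  have h := Finset.single_le_sum (f := fun i => ‖S ^ i * Y‖ ^ 2) (fun _ _ => sq_nonneg _)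
    (Finset.mem_range.2 hN)
  rwa [pow_zero, Matrix.one_mul] at h

theorem powLyapunov_le (S : Matrix ι ι ℝ) (N : ℕ) (Y : Matrix ι κ ℝ) :
    powLyapunov S N Y ≤ (∑ i ∈ Finset.range N, ‖S ^ i‖ ^ 2) * ‖Y‖ ^ 2 := by
  rw [Finset.sum_mul]
  refine Finset.sum_le_sum fun i _ => ?_
  rw [← mul_pow]
  exact pow_le_pow_left₀ (norm_nonneg _) (frobenius_norm_mul _ _) 2

theorem hasDerivAt_powLyapunov (S : Matrix ι ι ℝ) (N : ℕ) {W : ℝ → Matrix ι κ ℝ}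
    {W' : Matrix ι κ ℝ} {t : ℝ} (hW : HasDerivAt W W' t) :
    HasDerivAt (fun s => powLyapunov S N (W s))
      (∑ i ∈ Finset.range N, 2 * ((S ^ i * W t)ᵀ * (S ^ i * W')).trace) t :=
  HasDerivAt.fun_sum fun i _ =>
    hasDerivAt_frobenius_norm_sq (hasDerivAt_const_matrix_mul (S ^ i) hW)

theorem mul_sum_two_mul_trace_le (Γ : Matrix ι ι ℝ) (h : ℝ) (N : ℕ) (Z : Matrix ι κ ℝ) :
    h * ∑ i ∈ Finset.range N,
        2 * (((1 + h • Γ) ^ i * Z)ᵀ * ((1 + h • Γ) ^ i * (Γ * Z))).trace ≤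
      ‖(1 + h • Γ) ^ N * Z‖ ^ 2 - ‖Z‖ ^ 2 := by
  set S := 1 + h • Γ with hS
  have hsucc : ∀ i, S ^ (i + 1) * Z - S ^ i * Z = h • (S ^ i * (Γ * Z)) := fun i => by
    rw [pow_succ, Matrix.mul_assoc, ← Matrix.mul_sub, hS, Matrix.add_mul, Matrix.one_mul,
      add_sub_cancel_left, Matrix.smul_mul, Matrix.mul_smul]
  calc h * ∑ i ∈ Finset.range N, 2 * ((S ^ i * Z)ᵀ * (S ^ i * (Γ * Z))).trace
      = ∑ i ∈ Finset.range N,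
          2 * ((S ^ i * Z)ᵀ * (S ^ (i + 1) * Z - S ^ i * Z)).trace := by
        simp only [hsucc, Matrix.mul_smul, trace_smul, smul_eq_mul, Finset.mul_sum,
          mul_left_comm h]
    _ ≤ ∑ i ∈ Finset.range N, (‖S ^ (i + 1) * Z‖ ^ 2 - ‖S ^ i * Z‖ ^ 2) :=
        Finset.sum_le_sum fun i _ => two_mul_trace_transpose_mul_sub_le _ _
    _ = ‖S ^ N * Z‖ ^ 2 - ‖Z‖ ^ 2 := by
        rw [Finset.sum_range_sub fun i => ‖S ^ i * Z‖ ^ 2, pow_zero, Matrix.one_mul]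

theorem powLyapunov_deriv_le {Γ : Matrix ι ι ℝ} {h : ℝ} (hh : 0 < h) {N : ℕ} {u r : ι → ℝ}
    (hpow : ‖(1 + h • Γ) ^ N - vecMulVec u r‖ ≤ 1 / 2) {W : Matrix ι κ ℝ} (hW : r ᵥ* W = 0)
    (B : Matrix μ κ ℝ) :
    ∑ i ∈ Finset.range N,
        2 * (((1 + h • Γ) ^ i * W)ᵀ * ((1 + h • Γ) ^ i * (Γ * W * (Bᵀ * B)))).trace ≤
      -(3 / (4 * h)) * ‖W * Bᵀ‖ ^ 2 := by
  have hZ : r ᵥ* (W * Bᵀ) = 0 := by rw [← vecMul_vecMul, hW, zero_vecMul]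
  have hcontract : ‖(1 + h • Γ) ^ N * (W * Bᵀ)‖ ^ 2 ≤ (1 / 2 * ‖W * Bᵀ‖) ^ 2 :=
    pow_le_pow_left₀ (norm_nonneg _) (frobenius_norm_mul_le_of_vecMul_eq_zero hpow hZ) 2
  have htelescope := mul_sum_two_mul_trace_le Γ h N (W * Bᵀ)
  have hcyclic : ∀ M : Matrix ι ι ℝ, ((M * W)ᵀ * (M * (Γ * W * (Bᵀ * B)))).trace =
      ((M * (W * Bᵀ))ᵀ * (M * (Γ * (W * Bᵀ)))).trace := fun M => by
    rw [← Matrix.mul_assoc M, trace_transpose_mul_mul_gram]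
    simp only [Matrix.mul_assoc]
  simp only [hcyclic]
  rw [neg_mul, div_mul_eq_mul_div, ← neg_div, le_div_iff₀ (by positivity)]
  linarith

end Lyapunov

section TransitionMatrix

open scoped Matrix.Norms.Frobenius

variable {ι κ : Type*} [Fintype ι] [DecidableEq ι]

theorem hasDerivAt_inv_mul [Finite κ] {U : ℝ → Matrix ι ι ℝ} {X : ℝ → Matrix ι κ ℝ}
    {A : Matrix ι ι ℝ} {F : Matrix ι κ ℝ} {t : ℝ} (hU : HasDerivAt U (A * U t) t)
    (hdet : IsUnit (U t).det) (hX : HasDerivAt X (A * X t + F) t) :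
    HasDerivAt (fun s => (U s)⁻¹ * X s) ((U t)⁻¹ * F) t := by
  convert hasDerivAt_matrix_mul (hasDerivAt_matrix_inv hU hdet) hX using 1
  rw [Matrix.mul_assoc, Matrix.mul_assoc, mul_nonsing_inv _ hdet, Matrix.mul_one, Matrix.mul_add,
    Matrix.neg_mul, Matrix.mul_assoc, neg_add_cancel_left]

theorem inv_mul_eqOn_of_hasDerivAt {U X : ℝ → Matrix ι ι ℝ} {A : ℝ → Matrix ι ι ℝ} {s : Set ℝ}
    (hs : IsOpen s) (hs' : IsPreconnected s) (hU : ∀ t ∈ s, HasDerivAt U (A t * U t) t)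
    (hdet : ∀ t ∈ s, IsUnit (U t).det) (hX : ∀ t ∈ s, HasDerivAt X (A t * X t) t) {t₁ t₂ : ℝ}
    (h₁ : t₁ ∈ s) (h₂ : t₂ ∈ s) : (U t₁)⁻¹ * X t₁ = (U t₂)⁻¹ * X t₂ := by
  have hderiv : ∀ t ∈ s, HasDerivAt (fun t => (U t)⁻¹ * X t) 0 t := fun t ht => by
    simpa using hasDerivAt_inv_mul (F := 0) (hU t ht) (hdet t ht) (by simpa using hX t ht)
  exact hs.is_const_of_deriv_eq_zero hs'
    (fun t ht => (hderiv t ht).differentiableAt.differentiableWithinAt)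
    (fun t ht => (hderiv t ht).deriv) h₁ h₂

-- No regularity of `A` is assumed, so neither Liouville's formula nor uniqueness of solutions is
-- available: the set of singular times is shown to be clopen instead.
theorem isUnit_det_of_transition {A : ℝ → Matrix ι ι ℝ} {Φ : ℝ → ℝ → Matrix ι ι ℝ}
    (hΦ0 : ∀ t₀, Φ t₀ t₀ = 1)
    (hΦ : ∀ t₀ t, HasDerivAt (Φ · t₀) (A t * Φ t t₀) t) (t₀ t : ℝ) :
    IsUnit (Φ t t₀).det := by
  have hcont : ∀ t₀, Continuous fun s => (Φ s t₀).det := fun t₀ =>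
    (continuous_iff_continuousAt.2 fun s => (hΦ t₀ s).continuousAt).matrix_det
  have hclosed : IsClosed {s | (Φ s t₀).det = 0} := isClosed_eq (hcont t₀) continuous_const
  have hopen : IsOpen {s | (Φ s t₀).det = 0} := by
    refine Metric.isOpen_iff.2 fun s₁ (hs₁ : (Φ s₁ t₀).det = 0) => ?_
    have hne : ∀ᶠ s in nhds s₁, (Φ s s₁).det ≠ 0 :=
      (hcont s₁).continuousAt.eventually_ne (by simp [hΦ0])
    obtain ⟨ε, hε, hball⟩ := Metric.eventually_nhds_iff_ball.1 hne
    refine ⟨ε, hε, fun s hs => ?_⟩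
    have hconst : (Φ s s₁)⁻¹ * Φ s t₀ = Φ s₁ t₀ := by
      simpa [hΦ0] using inv_mul_eqOn_of_hasDerivAt Metric.isOpen_ball
        (convex_ball s₁ ε).isPreconnected (fun τ _ => hΦ s₁ τ) (fun τ hτ => (hball τ hτ).isUnit)
        (fun τ _ => hΦ t₀ τ) hs (Metric.mem_ball_self hε)
    have hdet := congrArg det hconst
    rw [det_mul, hs₁] at hdet
    exact (mul_eq_zero.1 hdet).resolve_left
      ((isUnit_nonsing_inv_det_iff).2 (hball s hs).isUnit).ne_zero
  rcases isClopen_iff.1 ⟨hclosed, hopen⟩ with hempty | huniv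
  · exact isUnit_iff_ne_zero.2 fun ht => Set.eq_empty_iff_forall_notMem.1 hempty t ht
  · have ht₀ : (Φ t₀ t₀).det = 0 := Set.eq_univ_iff_forall.1 huniv t₀
    simp [hΦ0] at ht₀

end TransitionMatrix

section GramIntegral

open scoped Matrix.Norms.Frobenius

variable {ι κ μ : Type*} [Fintype ι] [Fintype κ] [Fintype μ] {s u : ℝ}

theorem intervalIntegrable_trace_mul (K : Matrix ι ι ℝ) {Q : ℝ → Matrix ι ι ℝ}
    (hQ : ∀ a b, IntervalIntegrable (fun t => Q t a b) volume s u) :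
    IntervalIntegrable (fun t => (K * Q t).trace) volume s u := by
  have hentry : ∀ a, IntervalIntegrable (fun t => (K * Q t) a a) volume s u := fun a => by
    simpa only [mul_apply, Finset.sum_fn] using
      IntervalIntegrable.sum Finset.univ fun b _ => (hQ b a).const_mul (K a b)
  simpa only [trace, diag_apply, Finset.sum_fn] using
    IntervalIntegrable.sum Finset.univ fun a _ => hentry a

theorem integral_trace_mul (K : Matrix ι ι ℝ) {Q : ℝ → Matrix ι ι ℝ}
    (hQ : ∀ a b, IntervalIntegrable (fun t => Q t a b) volume s u) :
    ∫ t in s..u, (K * Q t).trace = (K * Matrix.of fun a b => ∫ t in s..u, Q t a b).trace := by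
  have hsum : ∀ a, IntervalIntegrable (fun t => ∑ b, K a b * Q t b a) volume s u := fun a => by
    simpa only [Finset.sum_fn] using
      IntervalIntegrable.sum Finset.univ fun b _ => (hQ b a).const_mul (K a b)
  simp only [trace, diag_apply, mul_apply, of_apply]
  rw [intervalIntegral.integral_finsetSum fun a _ => hsum a]
  refine Finset.sum_congr rfl fun a _ => ?_
  rw [intervalIntegral.integral_finsetSum fun b _ => (hQ b a).const_mul _]
  simp only [intervalIntegral.integral_const_mul]

theorem dotProduct_mulVec_eq_trace (M : Matrix ι ι ℝ) (v : ι → ℝ) :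
    v ⬝ᵥ M *ᵥ v = (vecMulVec v v * M).trace := by
  rw [vecMulVec_mul, trace_vecMulVec, dotProduct_mulVec, dotProduct_comm]

theorem posSemidef_integral {ν : Type*} [Finite ν] {Q : ℝ → Matrix ν ν ℝ} (hsu : s ≤ u)
    (hQ : ∀ a b, IntervalIntegrable (fun t => Q t a b) volume s u)
    (hpos : ∀ t, (Q t).PosSemidef) :
    (Matrix.of fun a b => ∫ t in s..u, Q t a b).PosSemidef := by
  have := Fintype.ofFinite ν
  refine PosSemidef.of_dotProduct_mulVec_nonneg ?_ fun v => ?_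
  · ext a b
    have hsymm : ∀ t, Q t b a = Q t a b := fun t => (hpos t).1.apply a b
    simp only [conjTranspose_apply, of_apply, star_trivial, hsymm]
  · rw [star_trivial, dotProduct_mulVec_eq_trace, ← integral_trace_mul _ hQ]
    refine intervalIntegral.integral_nonneg hsu fun t _ => ?_
    rw [← dotProduct_mulVec_eq_trace]
    exact (hpos t).dotProduct_mulVec_nonneg v

theorem frobenius_norm_sq_mul_transpose (W : Matrix ι κ ℝ) (B : Matrix μ κ ℝ) :
    ‖W * Bᵀ‖ ^ 2 = (Wᵀ * W * (Bᵀ * B)).trace := by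
  rw [frobenius_norm_sq_eq_trace, transpose_mul, transpose_transpose, Matrix.mul_assoc,
    ← Matrix.mul_assoc Bᵀ, ← Matrix.mul_assoc, trace_mul_cycle]

variable {B : ℝ → Matrix μ κ ℝ}

theorem intervalIntegrable_norm_sq_mul_transpose (W : Matrix ι κ ℝ)
    (hQ : ∀ a b, IntervalIntegrable (fun t => ((B t)ᵀ * B t) a b) volume s u) :
    IntervalIntegrable (fun t => ‖W * (B t)ᵀ‖ ^ 2) volume s u := by
  simpa only [frobenius_norm_sq_mul_transpose] using intervalIntegrable_trace_mul (Wᵀ * W) hQ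

theorem mul_norm_sq_le_integral_norm_sq_mul_transpose (hsu : s ≤ u)
    (hQ : ∀ a b, IntervalIntegrable (fun t => ((B t)ᵀ * B t) a b) volume s u) {ε : ℝ}
    (hε : ε ≤ sigmaMin (Matrix.of fun a b => ∫ t in s..u, ((B t)ᵀ * B t) a b))
    (W : Matrix ι κ ℝ) : ε * ‖W‖ ^ 2 ≤ ∫ t in s..u, ‖W * (B t)ᵀ‖ ^ 2 := by
  classical
  have hgram : ∀ t, ((B t)ᵀ * B t).PosSemidef := fun t => posSemidef_conjTranspose_mul_self (B t)
  simp only [frobenius_norm_sq_mul_transpose]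
  rw [integral_trace_mul _ hQ]
  exact mul_frobenius_norm_sq_le_trace
    (posSemidef_sub_smul_one_of_le_sigmaMin (posSemidef_integral hsu hQ hgram) hε) W

theorem le_sq_mul_of_le_sigmaMin_integral (hsu : s ≤ u) {b : ℝ}
    (hB : ∀ t ∈ Set.Icc s u, ‖B t‖ ≤ b)
    (hQ : ∀ a b, IntervalIntegrable (fun t => ((B t)ᵀ * B t) a b) volume s u) {ε : ℝ}
    (hε0 : 0 < ε)
    (hε : ε ≤ sigmaMin (Matrix.of fun a b => ∫ t in s..u, ((B t)ᵀ * B t) a b)) :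
    ε ≤ b ^ 2 * (u - s) := by
  classical
  have : Nonempty κ := by
    by_contra hκ
    have := not_nonempty_iff.1 hκ
    exact (hε0.trans_le hε).ne' (sigmaMin_of_isEmpty _)
  have hone : (1 : ℝ) ≤ ‖(1 : Matrix κ κ ℝ)‖ ^ 2 := by
    rw [frobenius_norm_sq_eq_trace, transpose_one, Matrix.one_mul, trace_one]
    exact_mod_cast Fintype.card_pos
  calc ε ≤ ε * ‖(1 : Matrix κ κ ℝ)‖ ^ 2 := le_mul_of_one_le_right hε0.le hone
    _ ≤ ∫ t in s..u, ‖(1 : Matrix κ κ ℝ) * (B t)ᵀ‖ ^ 2 :=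
        mul_norm_sq_le_integral_norm_sq_mul_transpose hsu hQ hε 1
    _ ≤ ∫ _ in s..u, b ^ 2 := by
        refine intervalIntegral.integral_mono_on hsu
          (intervalIntegrable_norm_sq_mul_transpose 1 hQ) intervalIntegrable_const fun t ht => ?_
        rw [Matrix.one_mul, frobenius_norm_transpose]
        exact pow_le_pow_left₀ (norm_nonneg _) (hB t ht) 2
    _ = b ^ 2 * (u - s) := by rw [intervalIntegral.integral_const, smul_eq_mul, mul_comm]

end GramIntegral

section Excitation

open scoped Matrix.Norms.Frobenius

/-- Excitation of `Q` measured by the rate `ε / (1 + T²)` instead of the rate `δ(ε, T)` of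
`SuffExcitingCT`; for bounded `Q` it is the weaker requirement. -/
def WeaklyExcitingCT {ι : Type*} [Fintype ι] (Q : ℝ → Matrix ι ι ℝ) : Prop :=
  ∃ ε T : ℕ → ℝ, (∀ i, 0 < ε i) ∧ (∀ i, 0 < T i) ∧
    (∀ i, ε i ≤ sigmaMin (Matrix.of fun a b =>
      ∫ t in (∑ j ∈ Finset.range i, T j)..((∑ j ∈ Finset.range i, T j) + T i), Q t a b)) ∧
    Tendsto (fun N => ∑ i ∈ Finset.range N, ε i / (1 + T i ^ 2)) atTop atTop

theorem deltaCT_le {ε T q : ℝ} (hε : 0 < ε) (hT : 0 < T) (hq : ε ≤ q * T) :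
    deltaCT ε T ≤ (1 + q ^ 2) * (ε / (1 + T ^ 2)) := by
  have hpos : 0 < 1 + T ^ 2 := by positivity
  rw [← mul_div_assoc, le_div_iff₀ hpos]
  rcases le_total T 1 with h | h
  · calc deltaCT ε T * (1 + T ^ 2) ≤ ε / 2 * (1 + T ^ 2) :=
          mul_le_mul_of_nonneg_right (min_le_left _ _) hpos.le
      _ ≤ ε / 2 * 2 := by gcongr; nlinarith
      _ ≤ (1 + q ^ 2) * ε := by nlinarith [mul_nonneg (sq_nonneg q) hε.le]
  · have h1 : ε ^ 2 ≤ (q * T) ^ 2 := pow_le_pow_left₀ hε.le hq 2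
    have h2 : 1 + T ^ 2 ≤ 2 * T ^ 3 := by nlinarith [mul_le_mul_of_nonneg_left h (sq_nonneg T)]
    calc deltaCT ε T * (1 + T ^ 2) ≤ ε ^ 3 / (240 * T ^ 5) * (1 + T ^ 2) :=
          mul_le_mul_of_nonneg_right (min_le_right _ _) hpos.le
      _ ≤ ε ^ 3 / (240 * T ^ 5) * (2 * T ^ 3) := by gcongr
      _ = ε * ε ^ 2 / (120 * T ^ 2) := by field_simp; ring
      _ ≤ ε * (q * T) ^ 2 / (120 * T ^ 2) := by gcongr
      _ = ε * q ^ 2 / 120 := by field_simp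
      _ ≤ (1 + q ^ 2) * ε := by nlinarith [mul_nonneg (sq_nonneg q) hε.le]

theorem SuffExcitingCT.weaklyExcitingCT {n : ℕ} {μ : Type*} [Fintype μ]
    {B : ℝ → Matrix μ (Fin n) ℝ} {b : ℝ} (hB : ∀ t, 0 ≤ t → specNorm (B t) ≤ b)
    (hQ : ∀ a b s u, IntervalIntegrable (fun t => ((B t)ᵀ * B t) a b) volume s u)
    (hexc : SuffExcitingCT fun t => (B t)ᵀ * B t) :
    WeaklyExcitingCT fun t => (B t)ᵀ * B t := by
  obtain ⟨ε, T, hε, hT, hσ, hdiv⟩ := hexc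
  refine ⟨ε, T, hε, hT, hσ, ?_⟩
  refine tendsto_atTop_mono (fun N => ?_)
    (hdiv.const_mul_atTop (show 0 < (1 + ((√n * b) ^ 2) ^ 2)⁻¹ by positivity))
  rw [Finset.mul_sum]
  refine Finset.sum_le_sum fun i _ => ?_
  have hstart : 0 ≤ ∑ j ∈ Finset.range i, T j := Finset.sum_nonneg fun j _ => (hT j).le
  have hBfrob : ∀ t, 0 ≤ t → ‖B t‖ ≤ √n * b := fun t ht => by
    simpa using frobenius_norm_le_sqrt_card_mul_of_specNorm_le (hB t ht)
  have hle := le_sq_mul_of_le_sigmaMin_integral (le_add_of_nonneg_right (hT i).le)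
    (fun t ht => hBfrob t (hstart.trans ht.1)) (fun a b => hQ a b _ _) (hε i) (hσ i)
  rw [add_sub_cancel_left] at hle
  rw [inv_mul_le_iff₀ (by positivity)]
  exact deltaCT_le (hε i) (hT i) hle

end Excitation

section Dissipation

open scoped Matrix.Norms.Frobenius

/-- On the set `S` of times, `W` solves `Ẇ = G W (Bᵀ B)` with `‖B‖ ≤ b`, and `V` decreases along the
solution at rate at least `c ‖W Bᵀ‖²`. It bundles what the excitation argument needs to know about
the disagreement `W` of the array and its Lyapunov function `V`. Norms are Frobenius norms. -/
structure IsDissipativeFlow {ι κ μ : Type*} [Fintype ι] [Fintype κ] [Fintype μ]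
    (G : Matrix ι ι ℝ) (B : ℝ → Matrix μ κ ℝ) (b : ℝ) (W : ℝ → Matrix ι κ ℝ) (V : ℝ → ℝ) (c : ℝ)
    (S : Set ℝ) : Prop where
  rate_pos : 0 < c
  norm_le : ∀ t ∈ S, ‖B t‖ ≤ b
  hasDerivAt : ∀ t ∈ S, HasDerivAt W (G * W t * ((B t)ᵀ * B t)) t
  differentiableAt : ∀ t ∈ S, DifferentiableAt ℝ V t
  deriv_le : ∀ t ∈ S, deriv V t ≤ -c * ‖W t * (B t)ᵀ‖ ^ 2

namespace IsDissipativeFlow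

variable {ι κ μ : Type*} [Fintype ι] [Fintype κ] [Fintype μ] {G : Matrix ι ι ℝ}
  {B : ℝ → Matrix μ κ ℝ} {W : ℝ → Matrix ι κ ℝ} {V : ℝ → ℝ} {b c s u : ℝ} {S S' : Set ℝ}

theorem mono (h : IsDissipativeFlow G B b W V c S) (hS : S' ⊆ S) :
    IsDissipativeFlow G B b W V c S' where
  rate_pos := h.rate_pos
  norm_le t ht := h.norm_le t (hS ht)
  hasDerivAt t ht := h.hasDerivAt t (hS ht)
  differentiableAt t ht := h.differentiableAt t (hS ht)
  deriv_le t ht := h.deriv_le t (hS ht)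

theorem antitoneOn (h : IsDissipativeFlow G B b W V c S) (hS : Convex ℝ S) : AntitoneOn V S :=
  antitoneOn_of_hasDerivWithinAt_nonpos hS
    (fun t ht => (h.differentiableAt t ht).continuousAt.continuousWithinAt)
    (fun t ht => (h.differentiableAt t (interior_subset ht)).hasDerivAt.hasDerivWithinAt)
    fun t ht => (h.deriv_le t (interior_subset ht)).trans
      (mul_nonpos_of_nonpos_of_nonneg (neg_nonpos.2 h.rate_pos.le) (sq_nonneg _))

theorem norm_deriv_le (h : IsDissipativeFlow G B b W V c S) {t : ℝ} (ht : t ∈ S) :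
    ‖G * W t * ((B t)ᵀ * B t)‖ ≤ ‖G‖ * b * ‖W t * (B t)ᵀ‖ :=
  calc ‖G * W t * ((B t)ᵀ * B t)‖ = ‖G * (W t * (B t)ᵀ) * B t‖ := by simp only [Matrix.mul_assoc]
    _ ≤ ‖G * (W t * (B t)ᵀ)‖ * ‖B t‖ := frobenius_norm_mul _ _
    _ ≤ ‖G‖ * ‖W t * (B t)ᵀ‖ * b :=
        mul_le_mul (frobenius_norm_mul _ _) (h.norm_le t ht) (norm_nonneg _) (by positivity)
    _ = ‖G‖ * b * ‖W t * (B t)ᵀ‖ := by ring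

theorem sq_norm_sub_le (h : IsDissipativeFlow G B b W V c (Set.Icc s u)) (hsu : s ≤ u) :
    ‖W u - W s‖ ^ 2 ≤ (u - s) * ((‖G‖ * b) ^ 2 / c * (V s - V u)) := by
  have hc := h.rate_pos
  have hinc := sq_norm_sub_le_mul_sub_of_sq_norm_deriv_le
    (g := fun t => -((‖G‖ * b) ^ 2 / c) * V t) hsu h.hasDerivAt
    (fun t ht => (h.differentiableAt t ht).hasDerivAt.const_mul _) fun t ht =>
      calc ‖G * W t * ((B t)ᵀ * B t)‖ ^ 2 ≤ (‖G‖ * b * ‖W t * (B t)ᵀ‖) ^ 2 :=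
            pow_le_pow_left₀ (norm_nonneg _) (h.norm_deriv_le ht) 2
        _ = -((‖G‖ * b) ^ 2 / c) * (-c * ‖W t * (B t)ᵀ‖ ^ 2) := by field_simp
        _ ≤ -((‖G‖ * b) ^ 2 / c) * deriv V t :=
            mul_le_mul_of_nonpos_left (h.deriv_le t ht) (neg_nonpos.2 (by positivity))
  linarith

theorem sq_norm_sub_left_le (h : IsDissipativeFlow G B b W V c (Set.Icc s u)) {t : ℝ}
    (ht : t ∈ Set.Icc s u) :
    ‖W t - W s‖ ^ 2 ≤ (u - s) * ((‖G‖ * b) ^ 2 / c * (V s - V u)) := by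
  have hc := h.rate_pos
  have hsu : s ≤ u := ht.1.trans ht.2
  have hVu : V u ≤ V t := h.antitoneOn (convex_Icc s u) ht (Set.right_mem_Icc.2 hsu) ht.2
  have hVs : V u ≤ V s :=
    h.antitoneOn (convex_Icc s u) (Set.left_mem_Icc.2 hsu) (Set.right_mem_Icc.2 hsu) hsu
  calc ‖W t - W s‖ ^ 2 ≤ (t - s) * ((‖G‖ * b) ^ 2 / c * (V s - V t)) :=
        (h.mono (Set.Icc_subset_Icc_right ht.2)).sq_norm_sub_le ht.1
    _ ≤ (t - s) * ((‖G‖ * b) ^ 2 / c * (V s - V u)) :=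
        mul_le_mul_of_nonneg_left (by gcongr) (sub_nonneg.2 ht.1)
    _ ≤ (u - s) * ((‖G‖ * b) ^ 2 / c * (V s - V u)) :=
        mul_le_mul_of_nonneg_right (sub_le_sub_right ht.2 s)
          (mul_nonneg (by positivity) (sub_nonneg.2 hVs))

theorem sq_norm_left_mul_transpose_le (h : IsDissipativeFlow G B b W V c (Set.Icc s u)) {t : ℝ}
    (ht : t ∈ Set.Icc s u) :
    ‖W s * (B t)ᵀ‖ ^ 2 ≤
      2 * ‖W t * (B t)ᵀ‖ ^ 2 + 2 / c * ((‖G‖ * b ^ 2) ^ 2 * (u - s) * (V s - V u)) := by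
  have hnorm : ‖W s * (B t)ᵀ‖ ≤ ‖W t * (B t)ᵀ‖ + ‖W t - W s‖ * b :=
    calc ‖W s * (B t)ᵀ‖ = ‖W t * (B t)ᵀ - (W t - W s) * (B t)ᵀ‖ := by
          rw [← Matrix.sub_mul, sub_sub_cancel]
      _ ≤ ‖W t * (B t)ᵀ‖ + ‖(W t - W s) * (B t)ᵀ‖ := norm_sub_le _ _
      _ ≤ ‖W t * (B t)ᵀ‖ + ‖W t - W s‖ * b := by
          gcongr
          refine (frobenius_norm_mul _ _).trans ?_
          rw [frobenius_norm_transpose]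
          exact mul_le_mul_of_nonneg_left (h.norm_le t ht) (norm_nonneg _)
  calc ‖W s * (B t)ᵀ‖ ^ 2 ≤ (‖W t * (B t)ᵀ‖ + ‖W t - W s‖ * b) ^ 2 :=
        pow_le_pow_left₀ (norm_nonneg _) hnorm 2
    _ ≤ 2 * (‖W t * (B t)ᵀ‖ ^ 2 + (‖W t - W s‖ * b) ^ 2) := add_sq_le
    _ = 2 * ‖W t * (B t)ᵀ‖ ^ 2 + 2 * b ^ 2 * ‖W t - W s‖ ^ 2 := by ring
    _ ≤ 2 * ‖W t * (B t)ᵀ‖ ^ 2 +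
          2 * b ^ 2 * ((u - s) * ((‖G‖ * b) ^ 2 / c * (V s - V u))) := by
        gcongr
        exact h.sq_norm_sub_left_le ht
    _ = _ := by ring

-- A small decrement of `V` keeps `W` close to `W s`, so that the integral of `‖W Bᵀ‖²`, which the
-- decrement controls, is comparable to the integral of `‖W s Bᵀ‖²`, which excitation bounds below.
theorem mul_sq_norm_left_le (h : IsDissipativeFlow G B b W V c (Set.Icc s u)) (hsu : s ≤ u)
    (hQ : ∀ a b, IntervalIntegrable (fun t => ((B t)ᵀ * B t) a b) volume s u) {ε : ℝ}
    (hε : ε ≤ sigmaMin (Matrix.of fun a b => ∫ t in s..u, ((B t)ᵀ * B t) a b)) :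
    ε * ‖W s‖ ^ 2 ≤ 2 / c * ((1 + (‖G‖ * b ^ 2) ^ 2 * (u - s) ^ 2) * (V s - V u)) := by
  have hc := h.rate_pos
  set H := 2 / c * ((‖G‖ * b ^ 2) ^ 2 * (u - s) * (V s - V u)) with hH
  have hg : ∀ t ∈ Set.Icc s u,
      HasDerivAt (fun t => -(2 / c) * V t + H * t) (-(2 / c) * deriv V t + H) t := fun t ht => by
    simpa using ((h.differentiableAt t ht).hasDerivAt.const_mul (-(2 / c))).fun_add
      ((hasDerivAt_id t).const_mul H)
  have hbound : ∀ t ∈ Set.Icc s u, ‖W s * (B t)ᵀ‖ ^ 2 ≤ -(2 / c) * deriv V t + H := fun t ht =>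
    calc ‖W s * (B t)ᵀ‖ ^ 2 ≤ 2 * ‖W t * (B t)ᵀ‖ ^ 2 + H := h.sq_norm_left_mul_transpose_le ht
      _ = -(2 / c) * (-c * ‖W t * (B t)ᵀ‖ ^ 2) + H := by field_simp
      _ ≤ -(2 / c) * deriv V t + H := by
          gcongr ?_ + H
          exact mul_le_mul_of_nonpos_left (h.deriv_le t ht) (neg_nonpos.2 (by positivity))
  calc ε * ‖W s‖ ^ 2 ≤ ∫ t in s..u, ‖W s * (B t)ᵀ‖ ^ 2 :=
        mul_norm_sq_le_integral_norm_sq_mul_transpose hsu hQ hε (W s)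
    _ ≤ (-(2 / c) * V u + H * u) - (-(2 / c) * V s + H * s) :=
        intervalIntegral.integral_le_sub_of_hasDeriv_right_of_le hsu
          (fun t ht => (hg t ht).continuousAt.continuousWithinAt)
          (fun t ht => (hg t (Set.Ioo_subset_Icc_self ht)).hasDerivWithinAt)
          ((intervalIntegrable_iff_integrableOn_Icc_of_le hsu).1
            (intervalIntegrable_norm_sq_mul_transpose (W s) hQ))
          fun t ht => hbound t (Set.Ioo_subset_Icc_self ht)
    _ = _ := by rw [hH]; ring

theorem mul_left_le_mul_sub (h : IsDissipativeFlow G B b W V c (Set.Icc s u)) (hsu : s ≤ u)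
    (hQ : ∀ a b, IntervalIntegrable (fun t => ((B t)ᵀ * B t) a b) volume s u) {ε : ℝ}
    (hε0 : 0 ≤ ε)
    (hε : ε ≤ sigmaMin (Matrix.of fun a b => ∫ t in s..u, ((B t)ᵀ * B t) a b)) {k : ℝ}
    (hk : 0 ≤ k) (hV : V s ≤ k * ‖W s‖ ^ 2) :
    ε / (1 + (u - s) ^ 2) * V s ≤ k * (2 / c) * (1 + (‖G‖ * b ^ 2) ^ 2) * (V s - V u) := by
  have hc := h.rate_pos
  have hD : 0 ≤ V s - V u := sub_nonneg.2 <|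
    h.antitoneOn (convex_Icc s u) (Set.left_mem_Icc.2 hsu) (Set.right_mem_Icc.2 hsu) hsu
  rw [div_mul_eq_mul_div, div_le_iff₀ (by positivity)]
  calc ε * V s ≤ k * (ε * ‖W s‖ ^ 2) := by
        rw [mul_left_comm]
        exact mul_le_mul_of_nonneg_left hV hε0
    _ ≤ k * (2 / c * ((1 + (‖G‖ * b ^ 2) ^ 2 * (u - s) ^ 2) * (V s - V u))) :=
        mul_le_mul_of_nonneg_left (h.mul_sq_norm_left_le hsu hQ hε) hk
    _ ≤ k * (2 / c * ((1 + (‖G‖ * b ^ 2) ^ 2) * (1 + (u - s) ^ 2) * (V s - V u))) := by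
        gcongr
        linarith [sq_nonneg (‖G‖ * b ^ 2), sq_nonneg (u - s)]
    _ = _ := by ring

theorem tendsto_zero (h : IsDissipativeFlow G B b W V c (Set.Ici 0))
    (hQ : ∀ a b s u, IntervalIntegrable (fun t => ((B t)ᵀ * B t) a b) volume s u)
    (hexc : WeaklyExcitingCT fun t => (B t)ᵀ * B t)
    (hlow : ∀ t, 0 ≤ t → ‖W t‖ ^ 2 ≤ V t) {k : ℝ} (hk : 0 < k)
    (hup : ∀ t, 0 ≤ t → V t ≤ k * ‖W t‖ ^ 2) :
    Tendsto W atTop (nhds 0) := by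
  obtain ⟨ε, T, hε, hT, hσ, hdiv⟩ := hexc
  have hc := h.rate_pos
  set τ : ℕ → ℝ := fun i => ∑ j ∈ Finset.range i, T j
  have hτ : ∀ i, 0 ≤ τ i := fun i => Finset.sum_nonneg fun j _ => (hT j).le
  have hpos : ∀ t, 0 ≤ t → 0 ≤ V t := fun t ht => (sq_nonneg _).trans (hlow t ht)
  set K := k * (2 / c) * (1 + (‖G‖ * b ^ 2) ^ 2)
  have hK : 0 < K := by positivity
  have hdecr : ∀ i, K⁻¹ * (ε i / (1 + T i ^ 2)) * V (τ i) ≤ V (τ i) - V (τ (i + 1)) := by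
    intro i
    rw [show τ (i + 1) = τ i + T i from Finset.sum_range_succ _ _, mul_assoc, inv_mul_le_iff₀ hK]
    have hwindow := (h.mono fun t ht => (hτ i).trans ht.1).mul_left_le_mul_sub
      (le_add_of_nonneg_right (hT i).le) (fun a b => hQ a b _ _) (hε i).le (hσ i) hk.le
      (hup _ (hτ i))
    rwa [add_sub_cancel_left] at hwindow
  have hsum : Tendsto (fun N => ∑ i ∈ Finset.range N, K⁻¹ * (ε i / (1 + T i ^ 2))) atTop atTop := by
    simpa only [Finset.mul_sum] using hdiv.const_mul_atTop (inv_pos.2 hK)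
  have hVτ : Tendsto (fun i => V (τ i)) atTop (nhds 0) :=
    tendsto_zero_of_mul_le_sub_succ (fun i => hpos _ (hτ i))
      (fun i => mul_nonneg (inv_nonneg.2 hK.le) (div_nonneg (hε i).le (by positivity))) hdecr hsum
  have hVlim :=
    tendsto_zero_of_antitoneOn_of_tendsto_comp (h.antitoneOn (convex_Ici 0)) hpos hτ hVτ
  have hsq : Tendsto (fun t => ‖W t‖ ^ 2) atTop (nhds 0) :=
    squeeze_zero' (Eventually.of_forall fun t => sq_nonneg _)
      ((eventually_ge_atTop 0).mono hlow) hVlim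
  exact tendsto_zero_iff_norm_tendsto_zero.2 (by simpa using hsq.sqrt)

end IsDissipativeFlow

end Dissipation

section CoupledArray

theorem transpose_mul_transpose_mul_mul {ν μ : Type*} [Fintype ν] [Fintype μ] (C : Matrix μ ν ℝ)
    (U : Matrix ν ν ℝ) : Uᵀ * Cᵀ * C * U = (C * U)ᵀ * (C * U) := by
  simp only [transpose_mul, Matrix.mul_assoc]

theorem IsInterconnection.sum_smul_sub {p : ℕ} {Γ : Matrix (Fin p) (Fin p) ℝ}
    (hΓ : IsInterconnection Γ) {ν : Type*} (W : Matrix (Fin p) ν ℝ) (i : Fin p) :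
    ∑ j ∈ Finset.univ.filter (fun j => j ≠ i), Γ i j • (W j - W i) = (Γ * W) i := by
  rw [Finset.filter_ne', Finset.sum_erase (f := fun j => Γ i j • (W j - W i)) _
    (by rw [sub_self, smul_zero])]
  ext a
  simp only [Finset.sum_apply, Pi.smul_apply, Pi.sub_apply, smul_eq_mul, mul_sub,
    Finset.sum_sub_distrib, ← Finset.sum_mul, hΓ.sum_row, zero_mul, sub_zero, mul_apply]

variable {ι ν μ : Type*} [Fintype ν] [DecidableEq ν]

/-- The disagreement of an array at time `t`, pulled back to the initial time: row `i` is
`U(t)⁻¹ x_i(t) - z`, where `U` is the fundamental matrix of the uncoupled dynamics and `z` the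
initial value of the trajectory with which the array is compared. -/
def disagreement (U : ℝ → Matrix ν ν ℝ) (x : ι → ℝ → ν → ℝ) (z : ν → ℝ) (t : ℝ) :
    Matrix ι ν ℝ :=
  Matrix.of fun i => (U t)⁻¹ *ᵥ x i t - z

theorem mulVec_disagreement {U : ℝ → Matrix ν ν ℝ} {t : ℝ} (hdet : IsUnit (U t).det)
    (x : ι → ℝ → ν → ℝ) (z : ν → ℝ) (i : ι) :
    U t *ᵥ disagreement U x z t i = x i t - U t *ᵥ z := by
  change U t *ᵥ ((U t)⁻¹ *ᵥ x i t - z) = _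
  rw [mulVec_sub, mulVec_mulVec, mul_nonsing_inv _ hdet, one_mulVec]

theorem vecMul_disagreement_eq_zero [Fintype ι] {U : ℝ → Matrix ν ν ℝ} {t₀ : ℝ} (hU : U t₀ = 1)
    (x : ι → ℝ → ν → ℝ) {r : ι → ℝ} (hr : ∑ i, r i = 1) :
    r ᵥ* disagreement U x (∑ i, r i • x i t₀) t₀ = 0 := by
  ext a
  simp only [disagreement, hU, inv_one, one_mulVec, vecMul, dotProduct, of_apply, Pi.sub_apply,
    mul_sub, Finset.sum_sub_distrib, ← Finset.sum_mul, hr, one_mul, Finset.sum_apply,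
    Pi.smul_apply, smul_eq_mul, sub_self, Pi.zero_apply]

theorem hasDerivAt_disagreement [Fintype μ] {p : ℕ} {Γ : Matrix (Fin p) (Fin p) ℝ}
    (hΓ : IsInterconnection Γ) {U : ℝ → Matrix ν ν ℝ} {A : Matrix ν ν ℝ} {C : Matrix μ ν ℝ}
    {x : Fin p → ℝ → ν → ℝ} {t : ℝ} (hU : HasDerivAt U (A * U t) t) (hdet : IsUnit (U t).det)
    (hx : ∀ i a, HasDerivAt (fun s => x i s a)
      ((A *ᵥ x i t + (U t * (U t)ᵀ * Cᵀ * C) *ᵥ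
        ∑ j ∈ Finset.univ.filter (fun j => j ≠ i), Γ i j • (x j t - x i t)) a) t) (z : ν → ℝ) :
    HasDerivAt (disagreement U x z)
      (Γ * disagreement U x z t * ((C * U t)ᵀ * (C * U t))) t := by
  set W := disagreement U x z t
  have hcoupling : ∀ i, ∑ j ∈ Finset.univ.filter (fun j => j ≠ i), Γ i j • (x j t - x i t) =
      U t *ᵥ (Γ * W) i := fun i => by
    have hdiff : ∀ j, x j t - x i t = U t *ᵥ (W j - W i) := fun j => by
      rw [mulVec_sub, mulVec_disagreement hdet, mulVec_disagreement hdet, sub_sub_sub_cancel_right]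
    rw [← hΓ.sum_smul_sub, mulVec_sum]
    simp only [hdiff, mulVec_smul]
  have hcol : HasDerivAt (fun s => Matrix.of fun a i => x i s a)
      (A * (Matrix.of fun a i => x i t a) +
        U t * (U t)ᵀ * Cᵀ * C * (U t * (Γ * W)ᵀ)) t :=
    hasDerivAt_matrix_iff.2 fun a i => by
      have h := hx i a
      rw [hcoupling] at h
      exact h
  have hrow := hasDerivAt_matrix_transpose (hasDerivAt_inv_mul hU hdet hcol)
  have hval : ((U t)⁻¹ * (U t * (U t)ᵀ * Cᵀ * C * (U t * (Γ * W)ᵀ)))ᵀ =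
      Γ * W * ((C * U t)ᵀ * (C * U t)) := by
    simp only [Matrix.mul_assoc, nonsing_inv_mul_cancel_left _ _ hdet, transpose_mul,
      transpose_transpose]
  rw [hval, hasDerivAt_matrix_iff] at hrow
  exact hasDerivAt_matrix_iff.2 fun i a => (hrow i a).sub_const (z a)

end CoupledArray

section Synchronization

variable {ι κ μ : Type*}

theorem vecMul_eq_zero_of_hasDerivAt_mul [Fintype ι] [Finite κ] {Γ : Matrix ι ι ℝ} {r : ι → ℝ}
    (hr : r ᵥ* Γ = 0) {W F : ℝ → Matrix ι κ ℝ} {t₀ : ℝ}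
    (hW : ∀ t, t₀ ≤ t → HasDerivAt W (Γ * F t) t) (hW₀ : r ᵥ* W t₀ = 0) {t : ℝ} (ht : t₀ ≤ t) :
    r ᵥ* W t = 0 := by
  have hderiv : ∀ τ, t₀ ≤ τ → ∀ a, HasDerivAt (fun s => (r ᵥ* W s) a) 0 τ := fun τ hτ a => by
    have hzero : (r ᵥ* (Γ * F τ)) a = 0 := by
      rw [← vecMul_vecMul, hr, zero_vecMul, Pi.zero_apply]
    rw [← hzero]
    exact HasDerivAt.fun_sum fun i _ => (hasDerivAt_matrix_iff.1 (hW τ hτ) i a).const_mul (r i)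
  ext a
  rw [← hW₀]
  exact constant_of_has_deriv_right_zero
    (fun τ hτ => (hderiv τ hτ.1 a).continuousAt.continuousWithinAt)
    (fun τ hτ => (hderiv τ hτ.1 a).hasDerivWithinAt) t ⟨ht, le_rfl⟩

open scoped Matrix.Norms.Frobenius

variable [Fintype κ] [Fintype μ]

theorem isDissipativeFlow_powLyapunov [Fintype ι] [DecidableEq ι] {Γ : Matrix ι ι ℝ} {h : ℝ}
    (hh : 0 < h) {N : ℕ} {u r : ι → ℝ} (hpow : ‖(1 + h • Γ) ^ N - vecMulVec u r‖ ≤ 1 / 2)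
    {B : ℝ → Matrix μ κ ℝ} {b : ℝ} {S : Set ℝ} (hB : ∀ t ∈ S, ‖B t‖ ≤ b) {W : ℝ → Matrix ι κ ℝ}
    (hW : ∀ t ∈ S, HasDerivAt W (Γ * W t * ((B t)ᵀ * B t)) t) (hrW : ∀ t ∈ S, r ᵥ* W t = 0) :
    IsDissipativeFlow Γ B b W (fun t => powLyapunov (1 + h • Γ) N (W t)) (3 / (4 * h)) S where
  rate_pos := by positivity
  norm_le := hB
  hasDerivAt := hW
  differentiableAt t ht := (hasDerivAt_powLyapunov _ N (hW t ht)).differentiableAt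
  deriv_le t ht := by
    rw [(hasDerivAt_powLyapunov _ N (hW t ht)).deriv]
    exact powLyapunov_deriv_le hh hpow (hrW t ht) (B t)

theorem ConnectedMat.tendsto_zero_of_weaklyExcitingCT {p : ℕ} {Γ : Matrix (Fin p) (Fin p) ℝ}
    (hconn : ConnectedMat Γ) (hΓ : IsInterconnection Γ) {r : Fin p → ℝ} (hr : r ᵥ* Γ = 0)
    (hr1 : ∑ i, r i = 1) {B : ℝ → Matrix μ κ ℝ} {b : ℝ}
    (hB : ∀ t, 0 ≤ t → specNorm (B t) ≤ b)
    (hQ : ∀ a b s u, IntervalIntegrable (fun t => ((B t)ᵀ * B t) a b) volume s u)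
    (hexc : WeaklyExcitingCT fun t => (B t)ᵀ * B t) {W : ℝ → Matrix (Fin p) κ ℝ}
    (hW : ∀ t, 0 ≤ t → HasDerivAt W (Γ * W t * ((B t)ᵀ * B t)) t) (hW0 : r ᵥ* W 0 = 0) :
    Tendsto W atTop (nhds 0) := by
  obtain ⟨h, N, hh, hN, hpow⟩ :=
    hconn.exists_norm_pow_sub_vecMulVec_le hΓ hr hr1 (show (0 : ℝ) < 1 / 2 by norm_num)
  have hrW : ∀ t, 0 ≤ t → r ᵥ* W t = 0 := fun t =>
    vecMul_eq_zero_of_hasDerivAt_mul hr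
      (fun t ht => by simpa only [Matrix.mul_assoc] using hW t ht) hW0
  have hflow := isDissipativeFlow_powLyapunov hh hpow
    (fun t ht => frobenius_norm_le_sqrt_card_mul_of_specNorm_le (hB t ht)) hW hrW
  set k := ∑ i ∈ Finset.range N, ‖(1 + h • Γ) ^ i‖ ^ 2
  have hk : 0 ≤ k := Finset.sum_nonneg fun _ _ => sq_nonneg _
  exact hflow.tendsto_zero hQ hexc (fun t _ => norm_sq_le_powLyapunov _ hN (W t))
    (add_pos_of_nonneg_of_pos hk one_pos) fun t _ => (powLyapunov_le _ N (W t)).trans <|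
      mul_le_mul_of_nonneg_right (le_add_of_nonneg_right zero_le_one) (sq_nonneg _)

theorem tendsto_eunorm_mulVec_zero {ι κ : Type*} [Fintype ι] [Fintype κ] {U : ℝ → Matrix ι κ ℝ}
    {a : ℝ} (hU : ∀ t, 0 ≤ t → specNorm (U t) ≤ a) {w : ℝ → κ → ℝ}
    (hw : Tendsto w atTop (nhds 0)) : Tendsto (fun t => eunorm (U t *ᵥ w t)) atTop (nhds 0) := by
  have hcont : Continuous fun v : κ → ℝ => a * eunorm v := by
    unfold eunorm
    fun_prop
  have hbound : Tendsto (fun t => a * eunorm (w t)) atTop (nhds 0) := by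
    simpa [eunorm, Function.comp_def] using (hcont.tendsto 0).comp hw
  refine squeeze_zero' (Eventually.of_forall fun t => eunorm_nonneg _) ?_ hbound
  filter_upwards [eventually_ge_atTop 0] with t ht
  exact (eunorm_mulVec_le _ _).trans (mul_le_mul_of_nonneg_right (hU t ht) (eunorm_nonneg _))

end Synchronization

theorem stmt10_general {ν μ : Type*} [Fintype ν] [DecidableEq ν] [Fintype μ] {p : ℕ}
    (A : ℝ → Matrix ν ν ℝ) (C : ℝ → Matrix μ ν ℝ) (Φ : ℝ → ℝ → Matrix ν ν ℝ)
    (hΦ0 : ∀ t₀ : ℝ, Φ t₀ t₀ = 1)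
    (hΦ : ∀ t₀ t : ℝ, ∀ a b : ν, HasDerivAt (fun s => Φ s t₀ a b) ((A t * Φ t t₀) a b) t)
    (abar : ℝ) (hΦbdd : ∀ t : ℝ, 0 ≤ t → specNorm (Φ t 0) ≤ abar)
    (bbar : ℝ) (hCΦbdd : ∀ t : ℝ, 0 ≤ t → specNorm (C t * Φ t 0) ≤ bbar)
    (hint : ∀ a b : ν, ∀ s u : ℝ,
      IntervalIntegrable (fun t => ((C t * Φ t 0)ᵀ * (C t * Φ t 0)) a b) volume s u)
    (hobs : WeaklyExcitingCT fun t => (C t * Φ t 0)ᵀ * (C t * Φ t 0))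
    (L : ℝ → Matrix ν μ ℝ) (hL : ∀ t, L t = Φ t 0 * (Φ t 0)ᵀ * (C t)ᵀ)
    (Γ : Matrix (Fin p) (Fin p) ℝ) (hΓ : IsInterconnection Γ) (hconn : ConnectedMat Γ)
    (r : Fin p → ℝ) (hr1 : r ᵥ* Γ = 0) (hr2 : ∑ i, r i = 1)
    (x : Fin p → ℝ → ν → ℝ)
    (hx : ∀ i, ∀ t : ℝ, 0 ≤ t → ∀ a : ν,
      HasDerivAt (fun s => x i s a)
        ((A t *ᵥ x i t + (L t * C t) *ᵥ
          ∑ j ∈ Finset.univ.filter (fun j => j ≠ i), Γ i j • (x j t - x i t)) a) t)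
    (xbar : ℝ → ν → ℝ) (hxbar : ∀ t, xbar t = Φ t 0 *ᵥ ∑ j, r j • x j 0) (i : Fin p) :
    Tendsto (fun t => eunorm (x i t - xbar t)) atTop (nhds 0) := by
  have hΦ' : ∀ t₀ t, HasDerivAt (Φ · t₀) (A t * Φ t t₀) t := fun t₀ t =>
    hasDerivAt_matrix_iff.2 (hΦ t₀ t)
  have hdet : ∀ t, IsUnit (Φ t 0).det := isUnit_det_of_transition hΦ0 hΦ' 0
  have hflow := fun t (ht : 0 ≤ t) => hasDerivAt_disagreement hΓ (hΦ' 0 t) (hdet t)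
    (C := C t) (fun i a => by simpa only [hL] using hx i t ht a) (∑ j, r j • x j 0)
  have hlim : Tendsto (disagreement (Φ · 0) x (∑ j, r j • x j 0)) atTop (nhds 0) :=
    hconn.tendsto_zero_of_weaklyExcitingCT hΓ hr1 hr2 hCΦbdd hint hobs hflow
      (vecMul_disagreement_eq_zero (hΦ0 0) x hr2)
  have hrow := tendsto_eunorm_mulVec_zero hΦbdd (tendsto_pi_nhds.1 hlim i)
  simpa only [hxbar, mulVec_disagreement (U := (Φ · 0)) (hdet _)] using hrow

theorem stmt10 {n m p : ℕ}
    (A : ℝ → Matrix (Fin n) (Fin n) ℝ) (C : ℝ → Matrix (Fin m) (Fin n) ℝ)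
    (Φ : ℝ → ℝ → Matrix (Fin n) (Fin n) ℝ)
    -- Φ is the state transition matrix of ẋ = A(t)x
    (hΦ0 : ∀ t₀ : ℝ, Φ t₀ t₀ = 1)
    (hΦ : ∀ t₀ t : ℝ, ∀ a b : Fin n,
      HasDerivAt (fun s => Φ s t₀ a b) ((A t * Φ t t₀) a b) t)
    -- Assumption 1 (boundedness)
    (abar : ℝ) (habar : 1 ≤ abar)
    (hΦbdd : ∀ t₁ t₂ : ℝ, 0 ≤ t₁ → 0 ≤ t₂ → specNorm (Φ t₁ t₂) ≤ abar)
    (cbar : ℝ) (hcbar : 1 ≤ cbar)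
    (hCbdd : ∀ t : ℝ, 0 ≤ t → specNorm (C t) ≤ cbar)
    -- integrability of the grammian integrand
    (hint : ∀ a b : Fin n, ∀ s u : ℝ,
      IntervalIntegrable (fun t => ((Φ t 0)ᵀ * (C t)ᵀ * C t * Φ t 0) a b) volume s u)
    -- asymptotic observability: the grammian integrand is sufficiently exciting
    (hobs : SuffExcitingCT (fun t => (Φ t 0)ᵀ * (C t)ᵀ * C t * Φ t 0))
    -- the feedback law
    (L : ℝ → Matrix (Fin n) (Fin m) ℝ)
    (hL : ∀ t, L t = Φ t 0 * (Φ t 0)ᵀ * (C t)ᵀ)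
    -- connected interconnection
    (Γ : Matrix (Fin p) (Fin p) ℝ)
    (hΓ : IsInterconnection Γ) (hconn : ConnectedMat Γ)
    (r : Fin p → ℝ) (hr1 : Matrix.vecMul r Γ = 0) (hr2 : ∑ i, r i = 1)
    -- solutions of the coupled array
    (x : Fin p → ℝ → Fin n → ℝ)
    (hx : ∀ i, ∀ t : ℝ, 0 ≤ t → ∀ a : Fin n,
      HasDerivAt (fun s => x i s a)
        (((A t).mulVec (x i t)
          + (L t * C t).mulVec
              (∑ j ∈ Finset.univ.filter (fun j => j ≠ i), Γ i j • (x j t - x i t))) a) t)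
    (xbar : ℝ → Fin n → ℝ)
    (hxbar : ∀ t, xbar t = (Φ t 0).mulVec (∑ j, r j • x j 0)) :
    ∀ i, Tendsto (fun t => eunorm (x i t - xbar t)) atTop (nhds 0) := by
  have hB : ∀ t, 0 ≤ t → specNorm (C t * Φ t 0) ≤ cbar * abar := fun t ht =>
    specNorm_mul_le_of_le (hCbdd t ht) (hΦbdd t 0 ht le_rfl)
  simp only [transpose_mul_transpose_mul_mul] at hint hobs
  exact stmt10_general A C Φ hΦ0 hΦ abar (fun t ht => hΦbdd t 0 ht le_rfl) (cbar * abar) hB hint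
    (hobs.weaklyExcitingCT hB hint) L hL Γ hΓ hconn r hr1 hr2 x hx xbar hxbar
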